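/- arXiv:2212.07041 — 2 statements merged into one kernel-verified Lean document; each statement's English description precedes it below -/
import Mathlib

section
/- Assume the element setup. Then the generalized Stokes–Dirac structure D_h is a Dirac structure: D_h equals its orthogonal complement in (F_p × F_q × B_p × B_p*) × (E_p × E_q × B_p* × B_p) with respect to the symmetrized pairing ⟨⟨(F₁,E₁),(F₂,E₂)⟩⟩ := P(F₁,E₂) + P(F₂,E₁) associated with the power pairing P. -/
/-- The generalized Stokes-Dirac structure on a single element: the set of tuples
`((f_p, f_q, y_p, y*), (e_p, e_q, u*, u_p))` satisfying the defining relations. -/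
def diracSet (p q : ℤ) {E_p F_p E_q F_q B_p B_q : Type*}
    [AddCommGroup E_p] [Module ℝ E_p] [AddCommGroup F_p] [Module ℝ F_p]
    [AddCommGroup E_q] [Module ℝ E_q] [AddCommGroup F_q] [Module ℝ F_q]
    [AddCommGroup B_p] [Module ℝ B_p] [AddCommGroup B_q] [Module ℝ B_q]
    (dpq : E_q →ₗ[ℝ] F_p) (dqp : E_p →ₗ[ℝ] F_q)
    (trp : E_p →ₗ[ℝ] B_p) (trq : E_q →ₗ[ℝ] B_q)
    (Q : B_q →ₗ[ℝ] Module.Dual ℝ B_p)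
    (T_p : Module.Dual ℝ B_p →ₗ[ℝ] F_p) (T_q : B_p →ₗ[ℝ] F_q) :
    Set ((F_p × F_q × B_p × Module.Dual ℝ B_p) ×
         (E_p × E_q × Module.Dual ℝ B_p × B_p)) :=
  {x | x.1.1 = ((-1 : ℝ) ^ (p * q + 1)) • dpq x.2.2.1
        + (((-1 : ℝ) ^ (p * q + 1 + q)) * (1 / 2)) • T_p (Q (trq x.2.2.1))
        + ((-1 : ℝ) ^ (p * q + 1 + q)) • T_p x.2.2.2.1
    ∧ x.1.2.1 = dqp x.2.1 + (((-1 : ℝ) ^ p) * (1 / 2)) • T_q (trp x.2.1)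
        + ((-1 : ℝ) ^ p) • T_q x.2.2.2.2
    ∧ x.1.2.2.2 = -(((-1 : ℝ) ^ p) • Q (trq x.2.2.1))
    ∧ x.1.2.2.1 = -(((-1 : ℝ) ^ p) • trp x.2.1)}

/-!
A Dirac structure arises from every effort-to-flow map `J` that is skew with respect to a pairing
separating flows: skewness puts the graph of `J` inside its orthogonal complement, and testing a
flow-effort pair `(f, e)` of the complement against the graph shows that `f - J e` pairs to zero
with every effort. For the Stokes-Dirac structure `J` is skew because of the halved boundary terms.
With them, integration by parts says that `⟨e_q|f_q⟩` and `⟨e_p|f_p⟩` involve, with opposite signs,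
the one bilinear form `⟨w|d_qp v⟩ + (-1)^p/2 Q(tr_q w)(tr_p v)`; the terms in `u*` and `u_p` cancel
against the outputs `y_p` and `y*`.
-/

section DiracStructure

variable {R E F : Type*} [CommRing R] [AddCommMonoid E] [Module R E] [AddCommGroup F] [Module R F]

/-- A Dirac structure for a pairing `P` of efforts in `E` with flows in `F`: a set of flow-effort
pairs that equals its own orthogonal complement for the symmetrization of `P`. Linearity is not
required separately, since every orthogonal complement is a submodule. -/
def IsDirac (P : E →ₗ[R] F →ₗ[R] R) (D : Set (F × E)) : Prop :=
  D = {x | ∀ y ∈ D, P y.2 x.1 + P x.2 y.1 = 0}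

theorem isDirac_graph_of_skew {P : E →ₗ[R] F →ₗ[R] R} (hP : P.SeparatingRight) {J : E → F}
    (hJ : ∀ x y, P x (J y) + P y (J x) = 0) : IsDirac P {x | x.1 = J x.2} := by
  refine Set.Subset.antisymm ?_ fun x hx ↦ sub_eq_zero.mp <| hP _ fun e ↦ ?_
  · rintro x (hx : x.1 = J x.2) y (hy : y.1 = J y.2)
    rw [hx, hy]
    exact hJ y.2 x.2
  · have orthogonal : P e x.1 + P x.2 (J e) = 0 := hx (J e, e) rfl
    rw [map_sub]
    linear_combination orthogonal - hJ e x.2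

end DiracStructure

section ProdPairing

variable {R E F E' F' : Type*} [CommSemiring R] [AddCommMonoid E] [Module R E]
  [AddCommMonoid F] [Module R F] [AddCommMonoid E'] [Module R E'] [AddCommMonoid F'] [Module R F']

/-- The orthogonal direct sum of two pairings, by which the power pairing is assembled from the
pairings of its ports. -/
def prodPairing (P : E →ₗ[R] F →ₗ[R] R) (P' : E' →ₗ[R] F' →ₗ[R] R) :
    E × E' →ₗ[R] F × F' →ₗ[R] R :=
  P.compl₁₂ (.fst R E E') (.fst R F F') + P'.compl₁₂ (.snd R E E') (.snd R F F')

theorem prodPairing_apply (P : E →ₗ[R] F →ₗ[R] R) (P' : E' →ₗ[R] F' →ₗ[R] R)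
    (e : E × E') (f : F × F') : prodPairing P P' e f = P e.1 f.1 + P' e.2 f.2 :=
  rfl

theorem separatingRight_prodPairing {P : E →ₗ[R] F →ₗ[R] R} {P' : E' →ₗ[R] F' →ₗ[R] R}
    (hP : P.SeparatingRight) (hP' : P'.SeparatingRight) : (prodPairing P P').SeparatingRight :=
  fun f hf ↦ Prod.ext
    (hP _ fun e ↦ by simpa [prodPairing_apply] using hf (e, 0))
    (hP' _ fun e ↦ by simpa [prodPairing_apply] using hf (0, e))

end ProdPairing

section PowerPairing

variable {R E_p F_p E_q F_q B_p : Type*} [CommSemiring R]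
  [AddCommMonoid E_p] [Module R E_p] [AddCommMonoid F_p] [Module R F_p]
  [AddCommMonoid E_q] [Module R E_q] [AddCommMonoid F_q] [Module R F_q]
  [AddCommMonoid B_p] [Module R B_p]

/-- The power pairing of the efforts `(e_p, e_q, u*, u_p)` with the flows `(f_p, f_q, y_p, y*)`. -/
def powerPairing (pairP : E_p →ₗ[R] F_p →ₗ[R] R) (pairQ : E_q →ₗ[R] F_q →ₗ[R] R) :
    E_p × E_q × Module.Dual R B_p × B_p →ₗ[R] F_p × F_q × B_p × Module.Dual R B_p →ₗ[R] R :=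
  prodPairing pairP (prodPairing pairQ (prodPairing .id (Module.Dual.eval R B_p)))

theorem powerPairing_apply (pairP : E_p →ₗ[R] F_p →ₗ[R] R) (pairQ : E_q →ₗ[R] F_q →ₗ[R] R)
    (e : E_p × E_q × Module.Dual R B_p × B_p) (f : F_p × F_q × B_p × Module.Dual R B_p) :
    powerPairing pairP pairQ e f =
      pairP e.1 f.1 + pairQ e.2.1 f.2.1 + f.2.2.2 e.2.2.2 + e.2.2.1 f.2.2.1 := by
  simp only [powerPairing, prodPairing_apply, LinearMap.id_apply, Module.Dual.eval_apply]
  ring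

theorem separatingRight_powerPairing [Module.Projective R B_p]
    {pairP : E_p →ₗ[R] F_p →ₗ[R] R} {pairQ : E_q →ₗ[R] F_q →ₗ[R] R}
    (hP : pairP.SeparatingRight) (hQ : pairQ.SeparatingRight) :
    (powerPairing (B_p := B_p) pairP pairQ).SeparatingRight :=
  separatingRight_prodPairing hP <| separatingRight_prodPairing hQ <|
    separatingRight_prodPairing LinearMap.id_separatingRight LinearMap.eval_separatingRight

end PowerPairing

theorem neg_one_zpow_mul_of_even_sub {K : Type*} [DivisionRing K] {j k m : ℤ}
    (h : Even (j + k - m)) : (-1 : K) ^ j * (-1) ^ k = (-1) ^ m := by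
  have hne : (-1 : K) ≠ 0 := neg_ne_zero.mpr one_ne_zero
  rw [← zpow_add₀ hne, ← sub_add_cancel (j + k) m, zpow_add₀ hne, h.neg_one_zpow, one_mul]

section StokesDirac

variable {K E_p F_p E_q F_q B_p B_q : Type*} [Field K]
  [AddCommGroup E_p] [Module K E_p] [AddCommGroup F_p] [Module K F_p]
  [AddCommGroup E_q] [Module K E_q] [AddCommGroup F_q] [Module K F_q]
  [AddCommGroup B_p] [Module K B_p] [AddCommGroup B_q] [Module K B_q]

/-- The effort-to-flow map `(e_p, e_q, u*, u_p) ↦ (f_p, f_q, y_p, y*)` whose graph is the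
generalized Stokes-Dirac structure. -/
def stokesDiracFlow (p q : ℤ) (dpq : E_q →ₗ[K] F_p) (dqp : E_p →ₗ[K] F_q)
    (trp : E_p →ₗ[K] B_p) (trq : E_q →ₗ[K] B_q) (Q : B_q →ₗ[K] Module.Dual K B_p)
    (T_p : Module.Dual K B_p →ₗ[K] F_p) (T_q : B_p →ₗ[K] F_q)
    (e : E_p × E_q × Module.Dual K B_p × B_p) : F_p × F_q × B_p × Module.Dual K B_p :=
  ((-1 : K) ^ (p * q + 1) • dpq e.2.1
      + ((-1 : K) ^ (p * q + 1 + q) * (1 / 2)) • T_p (Q (trq e.2.1))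
      + (-1 : K) ^ (p * q + 1 + q) • T_p e.2.2.1,
    dqp e.1 + ((-1 : K) ^ p * (1 / 2)) • T_q (trp e.1) + (-1 : K) ^ p • T_q e.2.2.2,
    -((-1 : K) ^ p • trp e.1),
    -((-1 : K) ^ p • Q (trq e.2.1)))

variable {n p q : ℤ} {pairP : E_p →ₗ[K] F_p →ₗ[K] K} {pairQ : E_q →ₗ[K] F_q →ₗ[K] K}
  {dpq : E_q →ₗ[K] F_p} {dqp : E_p →ₗ[K] F_q} {trp : E_p →ₗ[K] B_p} {trq : E_q →ₗ[K] B_q}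
  {Q : B_q →ₗ[K] Module.Dual K B_p} {T_p : Module.Dual K B_p →ₗ[K] F_p} {T_q : B_p →ₗ[K] F_q}

theorem pairP_smul_dpq (hpq : p + q = n + 1)
    (hibp : ∀ w v, (-1 : K) ^ (p * (n - p)) * pairP v (dpq w) =
      (-1 : K) ^ p * pairQ w (dqp v) + Q (trq w) (trp v)) (v : E_p) (w : E_q) :
    pairP v ((-1 : K) ^ (p * q + 1) • dpq w) =
      -pairQ w (dqp v) - (-1 : K) ^ p * Q (trq w) (trp v) := by
  have reversal : (-1 : K) ^ (p + 1) * (-1) ^ (p * (n - p)) = (-1) ^ (p * q + 1) :=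
    neg_one_zpow_mul_of_even_sub ⟨0, by linear_combination -p * hpq⟩
  have sign_sq : (-1 : K) ^ p * (-1) ^ p = 1 := by
    rw [← mul_zpow, neg_one_mul, neg_neg, one_zpow]
  rw [map_smul, smul_eq_mul, ← reversal, mul_assoc, hibp, zpow_add_one₀ (by simp)]
  linear_combination -pairQ w (dqp v) * sign_sq

theorem pairP_smul_T_p
    (hTp : ∀ v l, pairP v (T_p l) = (-1 : K) ^ ((p - 1) * (q - 1)) * l (trp v))
    (v : E_p) (l : Module.Dual K B_p) :
    pairP v ((-1 : K) ^ (p * q + 1 + q) • T_p l) = (-1 : K) ^ p * l (trp v) := by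
  rw [map_smul, smul_eq_mul, hTp, ← mul_assoc,
    neg_one_zpow_mul_of_even_sub ⟨p * q - p + 1, by ring⟩]

theorem pairP_stokesDiracFlow [NeZero (2 : K)] (hpq : p + q = n + 1)
    (hibp : ∀ w v, (-1 : K) ^ (p * (n - p)) * pairP v (dpq w) =
      (-1 : K) ^ p * pairQ w (dqp v) + Q (trq w) (trp v))
    (hTp : ∀ v l, pairP v (T_p l) = (-1 : K) ^ ((p - 1) * (q - 1)) * l (trp v))
    (v : E_p) (e : E_p × E_q × Module.Dual K B_p × B_p) :
    pairP v (stokesDiracFlow p q dpq dqp trp trq Q T_p T_q e).1 =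
      -(pairQ e.2.1 (dqp v) + (-1 : K) ^ p * (1 / 2) * Q (trq e.2.1) (trp v))
        + (-1 : K) ^ p * e.2.2.1 (trp v) := by
  have half_trace : pairP v (((-1 : K) ^ (p * q + 1 + q) * (1 / 2)) • T_p (Q (trq e.2.1))) =
      (-1 : K) ^ p * (1 / 2) * Q (trq e.2.1) (trp v) := by
    rw [mul_comm, mul_smul, map_smul, pairP_smul_T_p hTp, smul_eq_mul]
    ring
  rw [stokesDiracFlow, map_add, map_add, pairP_smul_dpq hpq hibp, half_trace, pairP_smul_T_p hTp]
  field_simp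
  ring

theorem pairQ_stokesDiracFlow (hTq : ∀ w u, pairQ w (T_q u) = Q (trq w) u)
    (w : E_q) (e : E_p × E_q × Module.Dual K B_p × B_p) :
    pairQ w (stokesDiracFlow p q dpq dqp trp trq Q T_p T_q e).2.1 =
      pairQ w (dqp e.1) + (-1 : K) ^ p * (1 / 2) * Q (trq w) (trp e.1)
        + (-1 : K) ^ p * Q (trq w) e.2.2.2 := by
  simp only [stokesDiracFlow, map_add, map_smul, smul_eq_mul, hTq]

theorem powerPairing_stokesDiracFlow [NeZero (2 : K)] (hpq : p + q = n + 1)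
    (hibp : ∀ w v, (-1 : K) ^ (p * (n - p)) * pairP v (dpq w) =
      (-1 : K) ^ p * pairQ w (dqp v) + Q (trq w) (trp v))
    (hTp : ∀ v l, pairP v (T_p l) = (-1 : K) ^ ((p - 1) * (q - 1)) * l (trp v))
    (hTq : ∀ w u, pairQ w (T_q u) = Q (trq w) u)
    (x y : E_p × E_q × Module.Dual K B_p × B_p) :
    powerPairing pairP pairQ x (stokesDiracFlow p q dpq dqp trp trq Q T_p T_q y) =
      (pairQ x.2.1 (dqp y.1) + (-1 : K) ^ p * (1 / 2) * Q (trq x.2.1) (trp y.1))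
      - (pairQ y.2.1 (dqp x.1) + (-1 : K) ^ p * (1 / 2) * Q (trq y.2.1) (trp x.1))
      + (-1 : K) ^ p * (Q (trq x.2.1) y.2.2.2 - Q (trq y.2.1) x.2.2.2)
      + (-1 : K) ^ p * (y.2.2.1 (trp x.1) - x.2.2.1 (trp y.1)) := by
  rw [powerPairing_apply, pairP_stokesDiracFlow hpq hibp hTp, pairQ_stokesDiracFlow hTq]
  simp only [stokesDiracFlow, map_neg, map_smul, LinearMap.neg_apply, LinearMap.smul_apply,
    smul_eq_mul]
  ring

theorem generalized_stokes_dirac_is_dirac_general [NeZero (2 : K)] (hpq : p + q = n + 1)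
    (hP : pairP.SeparatingRight) (hQ : pairQ.SeparatingRight)
    (hibp : ∀ w v, (-1 : K) ^ (p * (n - p)) * pairP v (dpq w) =
      (-1 : K) ^ p * pairQ w (dqp v) + Q (trq w) (trp v))
    (hTp : ∀ v l, pairP v (T_p l) = (-1 : K) ^ ((p - 1) * (q - 1)) * l (trp v))
    (hTq : ∀ w u, pairQ w (T_q u) = Q (trq w) u) :
    IsDirac (powerPairing pairP pairQ)
      {x | x.1 = stokesDiracFlow p q dpq dqp trp trq Q T_p T_q x.2} :=
  isDirac_graph_of_skew (separatingRight_powerPairing hP hQ) fun x y ↦ by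
    simp only [powerPairing_stokesDiracFlow hpq hibp hTp hTq]
    ring

end StokesDirac

theorem diracSet_eq_graph (p q : ℤ) {E_p F_p E_q F_q B_p B_q : Type*}
    [AddCommGroup E_p] [Module ℝ E_p] [AddCommGroup F_p] [Module ℝ F_p]
    [AddCommGroup E_q] [Module ℝ E_q] [AddCommGroup F_q] [Module ℝ F_q]
    [AddCommGroup B_p] [Module ℝ B_p] [AddCommGroup B_q] [Module ℝ B_q]
    (dpq : E_q →ₗ[ℝ] F_p) (dqp : E_p →ₗ[ℝ] F_q) (trp : E_p →ₗ[ℝ] B_p) (trq : E_q →ₗ[ℝ] B_q)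
    (Q : B_q →ₗ[ℝ] Module.Dual ℝ B_p) (T_p : Module.Dual ℝ B_p →ₗ[ℝ] F_p)
    (T_q : B_p →ₗ[ℝ] F_q) :
    diracSet p q dpq dqp trp trq Q T_p T_q =
      {x | x.1 = stokesDiracFlow p q dpq dqp trp trq Q T_p T_q x.2} := by
  ext x
  simp only [diracSet, stokesDiracFlow, Set.mem_ofPred_eq, Prod.ext_iff,
    and_comm (a := x.1.2.2.1 = _)]

/-- The generalized Stokes-Dirac structure is a Dirac structure: it equals its
orthogonal complement with respect to the symmetrized pairing associated with the
power pairing `P((f_p,f_q,y_p,y*),(e_p,e_q,u*,u_p)) = ⟨e_p|f_p⟩_p + ⟨e_q|f_q⟩_q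
+ y*(u_p) + u*(y_p)`. -/
theorem generalized_stokes_dirac_is_dirac
    (n p q : ℤ) (hpq : p + q = n + 1)
    {E_p F_p E_q F_q B_p B_q : Type*}
    [AddCommGroup E_p] [Module ℝ E_p] [FiniteDimensional ℝ E_p]
    [AddCommGroup F_p] [Module ℝ F_p] [FiniteDimensional ℝ F_p]
    [AddCommGroup E_q] [Module ℝ E_q] [FiniteDimensional ℝ E_q]
    [AddCommGroup F_q] [Module ℝ F_q] [FiniteDimensional ℝ F_q]
    [AddCommGroup B_p] [Module ℝ B_p] [FiniteDimensional ℝ B_p]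
    [AddCommGroup B_q] [Module ℝ B_q] [FiniteDimensional ℝ B_q]
    (pairP : E_p →ₗ[ℝ] F_p →ₗ[ℝ] ℝ)
    (hP₁ : ∀ e : E_p, (∀ f : F_p, pairP e f = 0) → e = 0)
    (hP₂ : ∀ f : F_p, (∀ e : E_p, pairP e f = 0) → f = 0)
    (pairQ : E_q →ₗ[ℝ] F_q →ₗ[ℝ] ℝ)
    (hQ₁ : ∀ e : E_q, (∀ f : F_q, pairQ e f = 0) → e = 0)
    (hQ₂ : ∀ f : F_q, (∀ e : E_q, pairQ e f = 0) → f = 0)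
    (dpq : E_q →ₗ[ℝ] F_p) (dqp : E_p →ₗ[ℝ] F_q)
    (trp : E_p →ₗ[ℝ] B_p) (trq : E_q →ₗ[ℝ] B_q)
    (Q : B_q →ₗ[ℝ] Module.Dual ℝ B_p)
    (hibp : ∀ (w : E_q) (v : E_p),
      (-1 : ℝ) ^ (p * (n - p)) * pairP v (dpq w)
        = (-1 : ℝ) ^ p * pairQ w (dqp v) + Q (trq w) (trp v))
    (T_p : Module.Dual ℝ B_p →ₗ[ℝ] F_p)
    (hTp : ∀ (v : E_p) (l : Module.Dual ℝ B_p),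
      pairP v (T_p l) = (-1 : ℝ) ^ ((p - 1) * (q - 1)) * l (trp v))
    (T_q : B_p →ₗ[ℝ] F_q)
    (hTq : ∀ (w : E_q) (u : B_p), pairQ w (T_q u) = Q (trq w) u) :
    diracSet p q dpq dqp trp trq Q T_p T_q =
      {x | ∀ y ∈ diracSet p q dpq dqp trp trq Q T_p T_q,
        (pairP y.2.1 x.1.1 + pairQ y.2.2.1 x.1.2.1
          + x.1.2.2.2 y.2.2.2.2 + y.2.2.2.1 x.1.2.2.1)
        + (pairP x.2.1 y.1.1 + pairQ x.2.2.1 y.1.2.1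
          + y.1.2.2.2 x.2.2.2.2 + x.2.2.2.1 y.1.2.2.1) = 0} := by
  simpa only [IsDirac, powerPairing_apply, ← diracSet_eq_graph] using
    generalized_stokes_dirac_is_dirac_general hpq hP₂ hQ₂ hibp hTp hTq
end

section
/- Assume the element setup. Then every tuple (f_p, f_q, y_p, y*, e_p, e_q, u*, u_p) in the generalized Stokes–Dirac structure D_h satisfies the power conservation identity ⟨e_p|f_p⟩_p + ⟨e_q|f_q⟩_q + y*(u_p) + u*(y_p) = 0. -/
/-!
With the signs prescribed by the structure, integration by parts says that the two exterior
derivatives together produce exactly the boundary power `-(-1) ^ p * Q (tr_q e_q) (tr_p e_p)`.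
Each of the two boundary lifts `T_p` and `T_q` in the flows returns one half of this power with the
opposite sign. What remains of the lifts is the power supplied through the inputs `u*` and `u_p`,
which the outputs balance.
-/

theorem neg_one_zpow_mul_self {R : Type*} [DivisionRing R] (k : ℤ) :
    (-1 : R) ^ k * (-1) ^ k = 1 := by
  rw [← zpow_add₀ (neg_ne_zero.mpr one_ne_zero), (Even.add_self k).neg_one_zpow]

namespace StokesDirac

section Signs

variable {R : Type*} [DivisionRing R]

theorem neg_one_zpow_mul_add_one {n p q : ℤ} (hpq : p + q = n + 1) :
    (-1 : R) ^ (p * q + 1) = -((-1) ^ p * (-1) ^ (p * (n - p))) := by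
  have hne : (-1 : R) ≠ 0 := neg_ne_zero.mpr one_ne_zero
  have hexp : p * q = p + p * (n - p) := by linear_combination p * hpq
  rw [zpow_add_one₀ hne, hexp, zpow_add₀ hne, mul_neg_one]

theorem neg_one_zpow_mul_add_one_add (p q : ℤ) :
    (-1 : R) ^ (p * q + 1 + q) = (-1) ^ p * (-1) ^ ((p - 1) * (q - 1)) := by
  have hne : (-1 : R) ≠ 0 := neg_ne_zero.mpr one_ne_zero
  have hexp : p * q + 1 + q = p + (p - 1) * (q - 1) + (q + q) := by ring
  rw [hexp, zpow_add₀ hne, zpow_add₀ hne, (Even.add_self q).neg_one_zpow, mul_one]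

end Signs

variable {K E_p F_p E_q F_q B_p B_q : Type*} [Field K]
  [AddCommGroup E_p] [Module K E_p] [AddCommGroup F_p] [Module K F_p]
  [AddCommGroup E_q] [Module K E_q] [AddCommGroup F_q] [Module K F_q]
  [AddCommGroup B_p] [Module K B_p] [AddCommGroup B_q] [Module K B_q]
  {n p q : ℤ}

theorem pairing_exteriorDerivatives_add (hpq : p + q = n + 1)
    {pairP : E_p →ₗ[K] F_p →ₗ[K] K} {pairQ : E_q →ₗ[K] F_q →ₗ[K] K}
    {dpq : E_q →ₗ[K] F_p} {dqp : E_p →ₗ[K] F_q} {trp : E_p →ₗ[K] B_p} {trq : E_q →ₗ[K] B_q}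
    {Q : B_q →ₗ[K] Module.Dual K B_p}
    (hibp : ∀ (w : E_q) (v : E_p), (-1 : K) ^ (p * (n - p)) * pairP v (dpq w)
      = (-1 : K) ^ p * pairQ w (dqp v) + Q (trq w) (trp v))
    (w : E_q) (v : E_p) :
    (-1 : K) ^ (p * q + 1) * pairP v (dpq w) + pairQ w (dqp v)
      = -((-1 : K) ^ p * Q (trq w) (trp v)) := by
  calc (-1 : K) ^ (p * q + 1) * pairP v (dpq w) + pairQ w (dqp v)
      = -((-1 : K) ^ p * ((-1 : K) ^ (p * (n - p)) * pairP v (dpq w))) + pairQ w (dqp v) := by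
        rw [neg_one_zpow_mul_add_one hpq, neg_mul, mul_assoc]
    _ = -((-1 : K) ^ p * ((-1 : K) ^ p * pairQ w (dqp v) + Q (trq w) (trp v)))
          + pairQ w (dqp v) := by rw [hibp]
    _ = -((-1 : K) ^ p * Q (trq w) (trp v)) := by
        rw [mul_add, ← mul_assoc, neg_one_zpow_mul_self]
        ring

theorem pairing_boundaryLift {pairP : E_p →ₗ[K] F_p →ₗ[K] K} {trp : E_p →ₗ[K] B_p}
    {T_p : Module.Dual K B_p →ₗ[K] F_p}
    (hTp : ∀ (v : E_p) (l : Module.Dual K B_p),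
      pairP v (T_p l) = (-1 : K) ^ ((p - 1) * (q - 1)) * l (trp v))
    (v : E_p) (l : Module.Dual K B_p) :
    (-1 : K) ^ (p * q + 1 + q) * pairP v (T_p l) = (-1 : K) ^ p * l (trp v) := by
  rw [hTp, neg_one_zpow_mul_add_one_add, mul_assoc, ← mul_assoc (_ ^ ((p - 1) * (q - 1))),
    neg_one_zpow_mul_self, one_mul]

theorem pairing_flow_p {pairP : E_p →ₗ[K] F_p →ₗ[K] K} {trp : E_p →ₗ[K] B_p}
    {T_p : Module.Dual K B_p →ₗ[K] F_p}
    (hTp : ∀ (v : E_p) (l : Module.Dual K B_p),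
      pairP v (T_p l) = (-1 : K) ^ ((p - 1) * (q - 1)) * l (trp v))
    (v : E_p) (g : F_p) (l u : Module.Dual K B_p) :
    pairP v ((-1 : K) ^ (p * q + 1) • g + ((-1 : K) ^ (p * q + 1 + q) * (1 / 2)) • T_p l
        + (-1 : K) ^ (p * q + 1 + q) • T_p u)
      = (-1 : K) ^ (p * q + 1) * pairP v g + (-1 : K) ^ p * (1 / 2 * l (trp v) + u (trp v)) := by
  simp only [map_add, map_smul, smul_eq_mul]
  linear_combination 1 / 2 * pairing_boundaryLift hTp v l + pairing_boundaryLift hTp v u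

theorem pairing_flow_q {pairQ : E_q →ₗ[K] F_q →ₗ[K] K} {trq : E_q →ₗ[K] B_q}
    {Q : B_q →ₗ[K] Module.Dual K B_p} {T_q : B_p →ₗ[K] F_q}
    (hTq : ∀ (w : E_q) (u : B_p), pairQ w (T_q u) = Q (trq w) u)
    (w : E_q) (g : F_q) (b u : B_p) :
    pairQ w (g + ((-1 : K) ^ p * (1 / 2)) • T_q b + (-1 : K) ^ p • T_q u)
      = pairQ w g + (-1 : K) ^ p * (1 / 2 * Q (trq w) b + Q (trq w) u) := by
  simp only [map_add, map_smul, smul_eq_mul, hTq]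
  ring

end StokesDirac

open StokesDirac in
theorem generalized_stokes_dirac_power_conservation_general
    {K E_p F_p E_q F_q B_p B_q : Type*} [Field K] [NeZero (2 : K)]
    [AddCommGroup E_p] [Module K E_p] [AddCommGroup F_p] [Module K F_p]
    [AddCommGroup E_q] [Module K E_q] [AddCommGroup F_q] [Module K F_q]
    [AddCommGroup B_p] [Module K B_p] [AddCommGroup B_q] [Module K B_q]
    {n p q : ℤ} (hpq : p + q = n + 1)
    {pairP : E_p →ₗ[K] F_p →ₗ[K] K} {pairQ : E_q →ₗ[K] F_q →ₗ[K] K}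
    {dpq : E_q →ₗ[K] F_p} {dqp : E_p →ₗ[K] F_q} {trp : E_p →ₗ[K] B_p} {trq : E_q →ₗ[K] B_q}
    {Q : B_q →ₗ[K] Module.Dual K B_p}
    (hibp : ∀ (w : E_q) (v : E_p), (-1 : K) ^ (p * (n - p)) * pairP v (dpq w)
      = (-1 : K) ^ p * pairQ w (dqp v) + Q (trq w) (trp v))
    {T_p : Module.Dual K B_p →ₗ[K] F_p}
    (hTp : ∀ (v : E_p) (l : Module.Dual K B_p),
      pairP v (T_p l) = (-1 : K) ^ ((p - 1) * (q - 1)) * l (trp v))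
    {T_q : B_p →ₗ[K] F_q} (hTq : ∀ (w : E_q) (u : B_p), pairQ w (T_q u) = Q (trq w) u)
    {f_p : F_p} {f_q : F_q} {y_p : B_p} {ystar : Module.Dual K B_p}
    {e_p : E_p} {e_q : E_q} {ustar : Module.Dual K B_p} {u_p : B_p}
    (hf_p : f_p = (-1 : K) ^ (p * q + 1) • dpq e_q
      + ((-1 : K) ^ (p * q + 1 + q) * (1 / 2)) • T_p (Q (trq e_q))
      + (-1 : K) ^ (p * q + 1 + q) • T_p ustar)
    (hf_q : f_q = dqp e_p + ((-1 : K) ^ p * (1 / 2)) • T_q (trp e_p) + (-1 : K) ^ p • T_q u_p)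
    (hystar : ystar = -((-1 : K) ^ p • Q (trq e_q)))
    (hy_p : y_p = -((-1 : K) ^ p • trp e_p)) :
    pairP e_p f_p + pairQ e_q f_q + ystar u_p + ustar y_p = 0 := by
  have output_star : ystar u_p = -((-1 : K) ^ p * Q (trq e_q) u_p) := by
    rw [hystar, LinearMap.neg_apply, LinearMap.smul_apply, smul_eq_mul]
  have output_p : ustar y_p = -((-1 : K) ^ p * ustar (trp e_p)) := by
    rw [hy_p, map_neg, map_smul, smul_eq_mul]
  have interior := pairing_exteriorDerivatives_add hpq hibp e_q e_p
  have halves : (1 / 2 + 1 / 2 : K) = 1 := add_halves 1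
  rw [hf_p, hf_q, pairing_flow_p hTp, pairing_flow_q hTq, output_star, output_p]
  linear_combination interior + (-1 : K) ^ p * Q (trq e_q) (trp e_p) * halves

/-- Power conservation: every tuple in the generalized Stokes-Dirac structure satisfies
`⟨e_p|f_p⟩_p + ⟨e_q|f_q⟩_q + y*(u_p) + u*(y_p) = 0`. -/
theorem generalized_stokes_dirac_power_conservation
    (n p q : ℤ) (hpq : p + q = n + 1)
    {E_p F_p E_q F_q B_p B_q : Type*}
    [AddCommGroup E_p] [Module ℝ E_p] [FiniteDimensional ℝ E_p]
    [AddCommGroup F_p] [Module ℝ F_p] [FiniteDimensional ℝ F_p]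
    [AddCommGroup E_q] [Module ℝ E_q] [FiniteDimensional ℝ E_q]
    [AddCommGroup F_q] [Module ℝ F_q] [FiniteDimensional ℝ F_q]
    [AddCommGroup B_p] [Module ℝ B_p] [FiniteDimensional ℝ B_p]
    [AddCommGroup B_q] [Module ℝ B_q] [FiniteDimensional ℝ B_q]
    (pairP : E_p →ₗ[ℝ] F_p →ₗ[ℝ] ℝ)
    (hP₁ : ∀ e : E_p, (∀ f : F_p, pairP e f = 0) → e = 0)
    (hP₂ : ∀ f : F_p, (∀ e : E_p, pairP e f = 0) → f = 0)
    (pairQ : E_q →ₗ[ℝ] F_q →ₗ[ℝ] ℝ)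
    (hQ₁ : ∀ e : E_q, (∀ f : F_q, pairQ e f = 0) → e = 0)
    (hQ₂ : ∀ f : F_q, (∀ e : E_q, pairQ e f = 0) → f = 0)
    (dpq : E_q →ₗ[ℝ] F_p) (dqp : E_p →ₗ[ℝ] F_q)
    (trp : E_p →ₗ[ℝ] B_p) (trq : E_q →ₗ[ℝ] B_q)
    (Q : B_q →ₗ[ℝ] Module.Dual ℝ B_p)
    (hibp : ∀ (w : E_q) (v : E_p),
      (-1 : ℝ) ^ (p * (n - p)) * pairP v (dpq w)
        = (-1 : ℝ) ^ p * pairQ w (dqp v) + Q (trq w) (trp v))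
    (T_p : Module.Dual ℝ B_p →ₗ[ℝ] F_p)
    (hTp : ∀ (v : E_p) (l : Module.Dual ℝ B_p),
      pairP v (T_p l) = (-1 : ℝ) ^ ((p - 1) * (q - 1)) * l (trp v))
    (T_q : B_p →ₗ[ℝ] F_q)
    (hTq : ∀ (w : E_q) (u : B_p), pairQ w (T_q u) = Q (trq w) u)
    (f_p : F_p) (f_q : F_q) (y_p : B_p) (ystar : Module.Dual ℝ B_p)
    (e_p : E_p) (e_q : E_q) (ustar : Module.Dual ℝ B_p) (u_p : B_p)
    (hmem : ((f_p, f_q, y_p, ystar), (e_p, e_q, ustar, u_p)) ∈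
      diracSet p q dpq dqp trp trq Q T_p T_q) :
    pairP e_p f_p + pairQ e_q f_q + ystar u_p + ustar y_p = 0 := by
  obtain ⟨hf_p, hf_q, hystar, hy_p⟩ := hmem
  exact generalized_stokes_dirac_power_conservation_general hpq hibp hTp hTq hf_p hf_q hystar hy_p
end
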